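/- arXiv:1205.1778 — 2 statements merged into one kernel-verified Lean document; each statement's English description precedes it below -/
import Mathlib

section
/- For every integer k ≥ 3 and every odd positive integer n, the difference A_n(12⋯k) - A_n(12⋯(k-2)k(k-1)) equals the number of alternating, 12⋯k-avoiding permutations of length n whose last entry has rank k-1. -/
open Function

def Contains {n k : ℕ} (p : Fin n → Fin n) (q : Fin k → Fin k) : Prop :=
  ∃ f : Fin k → Fin n, StrictMono f ∧ ∀ a b : Fin k, q a < q b ↔ p (f a) < p (f b)

def Avoids {n k : ℕ} (p : Fin n → Fin n) (q : Fin k → Fin k) : Prop :=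
  ¬ Contains p q

noncomputable def rank {n : ℕ} (p : Fin n → Fin n) (i : Fin n) : ℕ :=
  sSup {m | ∃ f : Fin m → Fin n, StrictMono f ∧ StrictMono (p ∘ f) ∧
    ∃ hm : 0 < m, f ⟨m - 1, Nat.sub_lt hm Nat.one_pos⟩ = i}

noncomputable def corank {n : ℕ} (p : Fin n → Fin n) (i : Fin n) : ℕ :=
  sSup {m | ∃ f : Fin m → Fin n, StrictMono f ∧ StrictMono (p ∘ f) ∧
    ∃ hm : 0 < m, f ⟨0, hm⟩ = i}

def Alternating {n : ℕ} (p : Fin n → Fin n) : Prop :=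
  ∀ (i : ℕ) (h : i + 1 < n), p ⟨i, by omega⟩ < p ⟨i + 1, h⟩ ↔ i % 2 = 0

def IsPeak {n : ℕ} (p : Fin n → Fin n) (i : Fin n) : Prop :=
  (∀ _ : 0 < i.1, p ⟨i.1 - 1, lt_of_le_of_lt (Nat.sub_le _ _) i.2⟩ < p i) ∧
  (∀ h : i.1 + 1 < n, p ⟨i.1 + 1, h⟩ < p i)

def IsValley {n : ℕ} (p : Fin n → Fin n) (i : Fin n) : Prop :=
  (∀ _ : 0 < i.1, p i < p ⟨i.1 - 1, lt_of_le_of_lt (Nat.sub_le _ _) i.2⟩) ∧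
  (∀ h : i.1 + 1 < n, p i < p ⟨i.1 + 1, h⟩)

/-!
Fix `k = t + 2` and call an entry *high* if its rank exceeds `t`, *low* otherwise. Group the
permutations of length `n` into classes, two permutations being equivalent when they have the same
low entries in the same positions. Exchanging two entries that are both larger than, and to the
right of, a common entry of rank `t` stays inside the class. Hence the lexicographically greatest
member of a class is its only member avoiding `12⋯k`, and the lexicographically least one is its
only member avoiding `12⋯(k-2)k(k-1)`.

If one member of a class is alternating with all its high entries at peaks (which sit at odd
indices, as `Fin n` counts from `0`), then every member of the class is alternating. The high
entries of an alternating `12⋯(k-2)k(k-1)`-avoider are peaks, and so are those of an alternating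
`12⋯k`-avoider whose last entry is low. As `n` is odd, the last entry is not a peak, so these two
kinds of avoiders are equinumerous; the remaining alternating `12⋯k`-avoiders have a last entry of
rank exactly `k - 1`.
-/

section General

theorem strictMono_snoc_iff {α : Type*} [Preorder α] {r : ℕ} {f : Fin (r + 1) → α} {x : α} :
    StrictMono (Fin.snoc f x : Fin (r + 2) → α) ↔ StrictMono f ∧ f (Fin.last r) < x := by
  simp only [Fin.strictMono_iff_lt_succ, Fin.forall_fin_succ' (n := r), Fin.succ_castSucc,
    Fin.snoc_castSucc, Fin.succ_last, Fin.snoc_last]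

theorem snoc_snoc_comp_swap {α : Type*} {m : ℕ} (f : Fin m → α) (a b : α) :
    (Fin.snoc (Fin.snoc f a : Fin (m + 1) → α) b : Fin (m + 2) → α) ∘
        Equiv.swap (Fin.last m).castSucc (Fin.last (m + 1)) =
      Fin.snoc (Fin.snoc f b : Fin (m + 1) → α) a := by
  funext x
  induction x using Fin.lastCases with
  | last => simp
  | cast x =>
    induction x using Fin.lastCases with
    | last => simp
    | cast x =>
      have hx : x.castSucc.castSucc ≠ (Fin.last m).castSucc := by
        simp [(Fin.castSucc_lt_last x).ne]
      simp [Equiv.swap_apply_of_ne_of_ne hx (Fin.castSucc_lt_last _).ne]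

theorem exists_gt_apply_eq {ι α : Type*} [LinearOrder ι] {p q : ι → α} (hp : Surjective p)
    (hq : Injective q) {i : ι} (hpre : ∀ j < i, p j = q j) (hne : p i ≠ q i) :
    ∃ b, i < b ∧ p b = q i := by
  obtain ⟨b, hb⟩ := hp (q i)
  refine ⟨b, lt_of_not_ge fun hbi => ?_, hb⟩
  rcases hbi.lt_or_eq with hlt | rfl
  · exact hlt.ne (hq ((hpre b hlt).symm.trans hb))
  · exact hne hb

theorem card_eq_of_biTotal_of_biUnique {α β : Type*} {R : α → β → Prop}
    (htotal : Relator.BiTotal R) (hunique : Relator.BiUnique R) : Nat.card α = Nat.card β := by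
  choose F hF using htotal.1
  refine Nat.card_eq_of_bijective F ⟨fun a b hab => hunique.1 (hF a) (hab ▸ hF b), fun b => ?_⟩
  obtain ⟨a, hab⟩ := htotal.2 b
  exact ⟨a, hunique.2 (hF a) hab⟩

theorem card_subtype_and_add_card_subtype_and_not {α : Type*} [Finite α] (P Q : α → Prop) :
    Nat.card {a // P a ∧ Q a} + Nat.card {a // P a ∧ ¬ Q a} = Nat.card {a // P a} :=
  Set.ncard_inter_add_ncard_sdiff_eq_ncard {a | P a} {a | Q a}

end General

section Rank

variable {n : ℕ} {p : Fin n → Fin n} {i j : Fin n}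

theorem lt_rank_iff_exists_chain {r : ℕ} :
    r < rank p i ↔ ∃ f : Fin (r + 1) → Fin n,
      StrictMono f ∧ StrictMono (p ∘ f) ∧ f (Fin.last r) = i := by
  let S : Set ℕ := {m | ∃ f : Fin m → Fin n, StrictMono f ∧ StrictMono (p ∘ f) ∧
    ∃ hm : 0 < m, f ⟨m - 1, Nat.sub_lt hm Nat.one_pos⟩ = i}
  have hbdd : BddAbove S :=
    ⟨n, fun m ⟨f, hf, _⟩ => by simpa using Fintype.card_le_of_injective f hf.injective⟩
  constructor
  · intro hr
    have hone : 1 ∈ S :=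
      ⟨fun _ => i, Subsingleton.strictMono _, Subsingleton.strictMono _, one_pos, rfl⟩
    have hmem : rank p i ∈ S := Nat.sSup_mem ⟨1, hone⟩ hbdd
    obtain ⟨d, hd⟩ := Nat.exists_eq_add_of_le' (Nat.succ_le_of_lt hr)
    rw [hd] at hmem
    obtain ⟨f, hf, hpf, _, hlast⟩ := hmem
    exact ⟨f ∘ Fin.natAdd d, hf.comp (Fin.strictMono_natAdd d),
      hpf.comp (Fin.strictMono_natAdd d), hlast⟩
  · rintro ⟨f, hf, hpf, hlast⟩
    exact Nat.lt_of_succ_le (le_csSup hbdd ⟨f, hf, hpf, r.succ_pos, hlast⟩)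

theorem zero_lt_rank : 0 < rank p i :=
  lt_rank_iff_exists_chain.2 ⟨fun _ => i, Subsingleton.strictMono (α := Fin 1) _,
    Subsingleton.strictMono (α := Fin 1) _, rfl⟩

theorem succ_lt_rank_iff {r : ℕ} :
    r + 1 < rank p i ↔ ∃ j < i, p j < p i ∧ r < rank p j := by
  simp only [lt_rank_iff_exists_chain]
  constructor
  · rintro ⟨f, hf, hpf, rfl⟩
    rw [← Fin.snoc_init_self f] at hf hpf
    rw [Fin.comp_snoc, strictMono_snoc_iff] at hpf
    rw [strictMono_snoc_iff] at hf
    exact ⟨_, hf.2, hpf.2, Fin.init f, hf.1, hpf.1, rfl⟩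
  · rintro ⟨j, hji, hpji, f, hf, hpf, rfl⟩
    refine ⟨Fin.snoc f i, strictMono_snoc_iff.2 ⟨hf, hji⟩, ?_, Fin.snoc_last ..⟩
    rw [Fin.comp_snoc]
    exact strictMono_snoc_iff.2 ⟨hpf, hpji⟩

theorem rank_lt_rank (hji : j < i) (hp : p j < p i) : rank p j < rank p i := by
  obtain ⟨r, hr⟩ := Nat.exists_eq_succ_of_ne_zero (zero_lt_rank (p := p) (i := j)).ne'
  rw [hr]
  exact succ_lt_rank_iff.2 ⟨j, hji, hp, hr ▸ r.lt_succ_self⟩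

theorem exists_lt_rank_eq {m : ℕ} (hm : 0 < m) (hi : m < rank p i) :
    ∃ j < i, p j < p i ∧ rank p j = m := by
  induction i using WellFoundedLT.induction with
  | ind i ih =>
    obtain ⟨r, rfl⟩ := Nat.exists_eq_succ_of_ne_zero hm.ne'
    obtain ⟨j, hji, hp, hj⟩ := succ_lt_rank_iff.1 hi
    rcases (Nat.succ_le_of_lt hj).lt_or_eq with hlt | heq
    · obtain ⟨l, hlj, hpl, hl⟩ := ih j hji hlt
      exact ⟨l, hlj.trans hji, hpl.trans hp, hl⟩
    · exact ⟨j, hji, hp, heq.symm⟩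

theorem rank_le_rank_of_covBy (hij : i ⋖ j) (hp : p j ≤ p i) : rank p j ≤ rank p i := by
  by_contra! hlt
  obtain ⟨l, hlj, hpl, hl⟩ := exists_lt_rank_eq zero_lt_rank hlt
  rcases (hij.le_of_lt hlj).lt_or_eq with hli | rfl
  · exact (rank_lt_rank hli (hpl.trans_le hp)).ne hl
  · exact hpl.not_ge hp

end Rank

section Patterns

variable {n : ℕ} {p : Fin n → Fin n}

theorem contains_perm_iff {k : ℕ} {σ : Equiv.Perm (Fin k)} :
    Contains p σ ↔ ∃ f : Fin k → Fin n, StrictMono f ∧ StrictMono (p ∘ f ∘ σ.symm) := by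
  refine exists_congr fun f => and_congr_right fun _ => ⟨fun h a b hab => ?_, fun h a b => ?_⟩
  · exact (h _ _).1 (by simpa using hab)
  · simpa using (h.lt_iff_lt (a := σ a) (b := σ b)).symm

theorem contains_id_iff {r : ℕ} :
    Contains p (id : Fin (r + 1) → Fin (r + 1)) ↔ ∃ i, r < rank p i := by
  rw [← Equiv.Perm.coe_one, contains_perm_iff]
  simp only [lt_rank_iff_exists_chain]
  exact ⟨fun ⟨f, hf, hpf⟩ => ⟨_, f, hf, hpf, rfl⟩, fun ⟨_, f, hf, hpf, _⟩ => ⟨f, hf, hpf⟩⟩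

theorem avoids_id_iff {r : ℕ} :
    Avoids p (id : Fin (r + 1) → Fin (r + 1)) ↔ ∀ i, rank p i ≤ r := by
  simp only [Avoids, contains_id_iff, not_exists, not_lt]

/-- The pattern `12⋯(k-2)k(k-1)` for `k = t + 2`. -/
abbrev swapLastTwo (t : ℕ) : Equiv.Perm (Fin (t + 2)) :=
  Equiv.swap (Fin.last t).castSucc (Fin.last (t + 1))

theorem contains_swapLastTwo_iff {r : ℕ} :
    Contains p (swapLastTwo (r + 1)) ↔
      ∃ j a b, j < a ∧ a < b ∧ p j < p b ∧ p b < p a ∧ r < rank p j := by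
  simp only [contains_perm_iff, Equiv.symm_swap, lt_rank_iff_exists_chain]
  constructor
  · rintro ⟨f, hf, hpf⟩
    obtain ⟨g, a, b, rfl⟩ : ∃ (g : Fin (r + 1) → Fin n) (a b : Fin n),
        f = Fin.snoc (Fin.snoc g a : Fin (r + 2) → Fin n) b :=
      ⟨Fin.init (Fin.init f), Fin.init f (Fin.last _), f (Fin.last _), by
        rw [Fin.snoc_init_self, Fin.snoc_init_self]⟩
    simp only [snoc_snoc_comp_swap, Fin.comp_snoc, strictMono_snoc_iff, Fin.snoc_last] at hf hpf
    exact ⟨_, a, b, hf.1.2, hf.2, hpf.1.2, hpf.2, g, hf.1.1, hpf.1.1, rfl⟩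
  · rintro ⟨_, a, b, hja, hab, hpjb, hpba, g, hg, hpg, rfl⟩
    refine ⟨Fin.snoc (Fin.snoc g a : Fin (r + 2) → Fin n) b, ?_, ?_⟩
    · simpa only [strictMono_snoc_iff, Fin.snoc_last] using ⟨⟨hg, hja⟩, hab⟩
    · simpa only [snoc_snoc_comp_swap, Fin.comp_snoc, strictMono_snoc_iff, Fin.snoc_last]
        using ⟨⟨hpg, hpjb⟩, hpba⟩

theorem contains_swapLastTwo_iff_rank_eq {t : ℕ} (ht : 0 < t) :
    Contains p (swapLastTwo t) ↔
      ∃ j a b, j < a ∧ a < b ∧ p j < p b ∧ p b < p a ∧ rank p j = t := by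
  obtain ⟨r, rfl⟩ := Nat.exists_eq_succ_of_ne_zero ht.ne'
  rw [contains_swapLastTwo_iff]
  constructor
  · rintro ⟨j, a, b, hja, hab, hpjb, hpba, hj⟩
    rcases (Nat.succ_le_of_lt hj).lt_or_eq with hlt | heq
    · obtain ⟨l, hlj, hplj, hl⟩ := exists_lt_rank_eq ht hlt
      exact ⟨l, a, b, hlj.trans hja, hab, hplj.trans hpjb, hpba, hl⟩
    · exact ⟨j, a, b, hja, hab, hpjb, hpba, heq.symm⟩
  · rintro ⟨j, a, b, hja, hab, hpjb, hpba, hj⟩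
    exact ⟨j, a, b, hja, hab, hpjb, hpba, hj ▸ r.lt_succ_self⟩

end Patterns

section SameLowEntries

variable {n t : ℕ} {p q s : Fin n → Fin n}

/-- `p` and `q` have the same entries of rank at most `t`, in the same positions and with the same
ranks. Truncating ranks at `t + 1` leaves the ranks of the remaining (high) entries free. -/
structure SameLowEntries (t : ℕ) (p q : Fin n → Fin n) : Prop where
  min_rank_eq : ∀ i, min (rank p i) (t + 1) = min (rank q i) (t + 1)
  apply_eq : ∀ i, rank p i ≤ t → p i = q i

namespace SameLowEntries

theorem refl (t : ℕ) (p : Fin n → Fin n) : SameLowEntries t p p :=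
  ⟨fun _ => rfl, fun _ _ => rfl⟩

theorem rank_le_iff (h : SameLowEntries t p q) (i : Fin n) : rank p i ≤ t ↔ rank q i ≤ t := by
  have := h.min_rank_eq i
  omega

theorem lt_rank_iff (h : SameLowEntries t p q) (i : Fin n) : t < rank p i ↔ t < rank q i := by
  simpa only [not_le] using not_congr (h.rank_le_iff i)

theorem symm (h : SameLowEntries t p q) : SameLowEntries t q p :=
  ⟨fun i => (h.min_rank_eq i).symm, fun i hi => (h.apply_eq i ((h.rank_le_iff i).2 hi)).symm⟩

theorem trans (hpq : SameLowEntries t p q) (hqs : SameLowEntries t q s) : SameLowEntries t p s :=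
  ⟨fun i => (hpq.min_rank_eq i).trans (hqs.min_rank_eq i),
    fun i hi => (hpq.apply_eq i hi).trans (hqs.apply_eq i ((hpq.rank_le_iff i).1 hi))⟩

theorem of_high_dominate (hlow : ∀ i, rank p i ≤ t → p i = q i)
    (hhigh : ∀ i, t < rank p i → ∃ j < i, p j < q i ∧ rank p j = t) : SameLowEntries t p q := by
  suffices h : ∀ i, ∀ r ≤ t, r < rank p i ↔ r < rank q i by
    refine ⟨fun i => eq_of_forall_lt_iff fun r => ?_, hlow⟩
    simp only [lt_min_iff, and_congr_left_iff]
    exact fun hr => h i r (Nat.le_of_lt_succ hr)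
  intro i
  induction i using WellFoundedLT.induction with
  | ind i ih =>
    rintro (_ | r) hr
    · simp only [zero_lt_rank]
    rcases le_or_gt (rank p i) t with hi | hi
    · refine succ_lt_rank_iff.trans (Iff.trans ?_ succ_lt_rank_iff.symm)
      refine exists_congr fun j => and_congr_right fun hji => ?_
      rw [ih j hji r (Nat.le_of_succ_le hr), hlow i hi]
      refine and_congr_left fun _ => ?_
      rcases le_or_gt (rank p j) t with hj | hj
      · rw [hlow j hj]
      · obtain ⟨l, hlj, hpl, hl⟩ := hhigh j hj
        refine iff_of_false (fun hlt => ?_) fun hlt => ?_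
        · exact (hj.trans (rank_lt_rank hji (hlow i hi ▸ hlt))).not_ge hi
        · exact (hl ▸ rank_lt_rank (hlj.trans hji) (hlow i hi ▸ hpl.trans hlt)).not_ge hi
    · obtain ⟨j, hji, hpj, hj⟩ := hhigh i hi
      refine iff_of_true (hr.trans_lt hi) (succ_lt_rank_iff.2 ⟨j, hji, ?_, ?_⟩)
      · rwa [← hlow j hj.le]
      · exact (ih j hji r (Nat.le_of_succ_le hr)).1 (hj ▸ hr)

theorem comp_swap (ht : 0 < t) {j a b : Fin n} (hj : rank p j = t) (hja : j < a) (hjb : j < b)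
    (hpa : p j < p a) (hpb : p j < p b) : SameLowEntries t p (p ∘ Equiv.swap a b) := by
  apply of_high_dominate
  · intro i hi
    have hia : i ≠ a := by rintro rfl; exact (hj ▸ rank_lt_rank hja hpa).not_ge hi
    have hib : i ≠ b := by rintro rfl; exact (hj ▸ rank_lt_rank hjb hpb).not_ge hi
    rw [comp_apply, Equiv.swap_apply_of_ne_of_ne hia hib]
  · intro i hi
    rcases eq_or_ne i a with rfl | hia
    · exact ⟨j, hja, by simpa using hpb, hj⟩
    rcases eq_or_ne i b with rfl | hib
    · exact ⟨j, hjb, by simpa using hpa, hj⟩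
    simpa [Equiv.swap_apply_of_ne_of_ne hia hib] using exists_lt_rank_eq ht hi

end SameLowEntries

/-- The permutations with the same low entries as `p`, ordered lexicographically. -/
def lowClass (t : ℕ) (p : Fin n → Fin n) : Set (Lex (Fin n → Fin n)) :=
  {q | Bijective (ofLex q) ∧ SameLowEntries t p (ofLex q)}

theorem SameLowEntries.lowClass_eq (h : SameLowEntries t p q) : lowClass t p = lowClass t q :=
  Set.ext fun _ => and_congr_right fun _ => ⟨h.symm.trans, h.trans⟩

theorem toLex_mem_lowClass (hp : Bijective p) : toLex p ∈ lowClass t p :=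
  ⟨hp, SameLowEntries.refl t p⟩

theorem avoids_id_iff_isGreatest (ht : 0 < t) (hp : Bijective p) :
    Avoids p (id : Fin (t + 2) → Fin (t + 2)) ↔ IsGreatest (lowClass t p) (toLex p) := by
  rw [avoids_id_iff]
  constructor
  · refine fun havoid => ⟨toLex_mem_lowClass hp, fun q hq => le_of_not_gt ?_⟩
    rintro ⟨i, hpre, hlt : p i < ofLex q i⟩
    have hi : t < rank p i := lt_of_not_ge fun hi => hlt.ne (hq.2.apply_eq i hi)
    obtain ⟨b, hib, hb⟩ := exists_gt_apply_eq hp.surjective hq.1.injective hpre hlt.ne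
    exact (havoid b).not_gt ((Nat.succ_le_of_lt hi).trans_lt (rank_lt_rank hib (hb ▸ hlt)))
  · intro hgreatest
    by_contra! ⟨b, hb⟩
    obtain ⟨a, hab, hpab, ha⟩ := exists_lt_rank_eq t.succ_pos hb
    obtain ⟨j, hja, hpja, hj⟩ := exists_lt_rank_eq ht (ha ▸ t.lt_succ_self : t < rank p a)
    have hmem : toLex (p ∘ Equiv.swap a b) ∈ lowClass t p :=
      ⟨hp.comp (Equiv.bijective _),
        .comp_swap ht hj hja (hja.trans hab) hpja (hpja.trans hpab)⟩
    have hlt := Pi.lex_desc (f := p ∘ Equiv.swap a b) hab.le (by simpa using hpab)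
    rw [comp_assoc, ← Equiv.coe_trans, Equiv.swap_swap] at hlt
    exact (hgreatest.2 hmem).not_gt hlt

theorem avoids_swapLastTwo_iff_isLeast (ht : 0 < t) (hp : Bijective p) :
    Avoids p (swapLastTwo t) ↔ IsLeast (lowClass t p) (toLex p) := by
  rw [Avoids, contains_swapLastTwo_iff_rank_eq ht]
  constructor
  · refine fun havoid => ⟨toLex_mem_lowClass hp, fun q hq => le_of_not_gt ?_⟩
    rintro ⟨i, hpre, hlt : ofLex q i < p i⟩
    have hi : t < rank (ofLex q) i :=
      (hq.2.lt_rank_iff i).1 (lt_of_not_ge fun hi => hlt.ne' (hq.2.apply_eq i hi))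
    obtain ⟨b, hib, hb⟩ :=
      exists_gt_apply_eq hp.surjective hq.1.injective (fun j hj => (hpre j hj).symm) hlt.ne'
    obtain ⟨j, hji, hqj, hj⟩ := exists_lt_rank_eq ht hi
    have hpj : p j = ofLex q j := (hpre j hji).symm
    have hrank : rank p j = t := by
      have := hq.2.min_rank_eq j
      omega
    exact havoid ⟨j, i, b, hji, hib, by rwa [hb, hpj], by rwa [hb], hrank⟩
  · rintro hleast ⟨j, a, b, hja, hab, hpjb, hpba, hj⟩
    have hmem : toLex (p ∘ Equiv.swap a b) ∈ lowClass t p :=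
      ⟨hp.comp (Equiv.bijective _),
        .comp_swap ht hj hja (hja.trans hab) (hpjb.trans hpba) hpjb⟩
    exact (hleast.2 hmem).not_gt (Pi.lex_desc hab.le hpba)

theorem exists_sameLowEntries_avoids_id (ht : 0 < t) (hp : Bijective p) :
    ∃ q, Bijective q ∧ SameLowEntries t p q ∧ Avoids q (id : Fin (t + 2) → Fin (t + 2)) := by
  obtain ⟨q, hq, hmax⟩ :=
    Set.exists_max_image (lowClass t p) id (Set.toFinite _) ⟨_, toLex_mem_lowClass hp⟩
  refine ⟨ofLex q, hq.1, hq.2, (avoids_id_iff_isGreatest ht hq.1).2 ?_⟩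
  rw [← hq.2.lowClass_eq]
  exact ⟨hq, hmax⟩

theorem exists_sameLowEntries_avoids_swapLastTwo (ht : 0 < t) (hp : Bijective p) :
    ∃ q, Bijective q ∧ SameLowEntries t p q ∧ Avoids q (swapLastTwo t) := by
  obtain ⟨q, hq, hmin⟩ :=
    Set.exists_min_image (lowClass t p) id (Set.toFinite _) ⟨_, toLex_mem_lowClass hp⟩
  refine ⟨ofLex q, hq.1, hq.2, (avoids_swapLastTwo_iff_isLeast ht hq.1).2 ?_⟩
  rw [← hq.2.lowClass_eq]
  exact ⟨hq, hmin⟩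

theorem SameLowEntries.eq_of_avoids_id (h : SameLowEntries t p q) (ht : 0 < t)
    (hp : Bijective p) (hq : Bijective q) (hpa : Avoids p (id : Fin (t + 2) → Fin (t + 2)))
    (hqa : Avoids q (id : Fin (t + 2) → Fin (t + 2))) : p = q := by
  rw [avoids_id_iff_isGreatest ht hp] at hpa
  rw [avoids_id_iff_isGreatest ht hq] at hqa
  exact toLex.injective (hpa.unique (h.lowClass_eq ▸ hqa))

theorem SameLowEntries.eq_of_avoids_swapLastTwo (h : SameLowEntries t p q) (ht : 0 < t)
    (hp : Bijective p) (hq : Bijective q) (hpa : Avoids p (swapLastTwo t))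
    (hqa : Avoids q (swapLastTwo t)) : p = q := by
  rw [avoids_swapLastTwo_iff_isLeast ht hp] at hpa
  rw [avoids_swapLastTwo_iff_isLeast ht hq] at hqa
  exact toLex.injective (hpa.unique (h.lowClass_eq ▸ hqa))

end SameLowEntries

section Alternating

variable {n t : ℕ} {p q : Fin n → Fin n}

theorem alternating_iff_covBy :
    Alternating p ↔ ∀ i j : Fin n, i ⋖ j → (p i < p j ↔ Even (i : ℕ)) := by
  simp only [Alternating, Nat.even_iff, Fin.covBy_iff, Nat.covBy_iff_add_one_eq]
  refine ⟨fun h i j hij => ?_, fun h i hi => h ⟨i, _⟩ ⟨i + 1, hi⟩ rfl⟩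
  have hj : ⟨i + 1, hij ▸ j.2⟩ = j := Fin.ext hij
  simpa only [hj] using h i (hij ▸ j.2)

theorem SameLowEntries.alternating (h : SameLowEntries t p q) (hp : Alternating p)
    (hodd : ∀ i, t < rank p i → Odd (i : ℕ)) : Alternating q := by
  rw [alternating_iff_covBy] at hp ⊢
  intro i j hij
  have hval : (i : ℕ) + 1 = j := Nat.covBy_iff_add_one_eq.1 (Fin.covBy_iff.1 hij)
  rcases le_or_gt (rank p i) t with hi | hi <;> rcases le_or_gt (rank p j) t with hj | hj
  · rw [← h.apply_eq i hi, ← h.apply_eq j hj]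
    exact hp i j hij
  · have hi_even : Even (i : ℕ) := by
      have := hodd j hj
      grind
    refine iff_of_true (lt_of_not_ge fun hle => ?_) hi_even
    exact (rank_le_rank_of_covBy hij hle).not_gt
      (((h.rank_le_iff i).1 hi).trans_lt ((h.lt_rank_iff j).1 hj))
  · refine iff_of_false (fun hlt => ?_) (Nat.not_even_iff_odd.2 (hodd i hi))
    exact (rank_lt_rank hij.lt hlt).not_ge
      (((h.rank_le_iff j).1 hj).trans ((h.lt_rank_iff i).1 hi).le)
  · have := hodd i hi
    have := hodd j hj
    grind

theorem Alternating.odd_of_lt_rank_of_avoids_swapLastTwo (halt : Alternating p) (ht : 0 < t)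
    (hp : Injective p) (havoid : Avoids p (swapLastTwo t)) {i : Fin n} (hi : t < rank p i) :
    Odd (i : ℕ) := by
  rw [Avoids, contains_swapLastTwo_iff_rank_eq ht] at havoid
  by_contra hi_odd
  obtain ⟨j, hji, hpj, hj⟩ := exists_lt_rank_eq ht hi
  obtain ⟨a, hja, hai⟩ := exists_le_covBy_of_lt hji
  have ha_odd : ¬ Even (a : ℕ) := by
    have : (a : ℕ) + 1 = i := Nat.covBy_iff_add_one_eq.1 (Fin.covBy_iff.1 hai)
    grind
  have hpia : p i < p a := (hp.ne hai.lt.ne').lt_of_le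
    (not_lt.1 (mt (alternating_iff_covBy.1 halt a i hai).1 ha_odd))
  have hne : j ≠ a := by
    rintro rfl
    exact hpj.not_gt hpia
  exact havoid ⟨j, a, i, hja.lt_of_ne hne, hai.lt, hpj, hpia, hj⟩

theorem Alternating.odd_of_lt_rank_of_avoids_id {p : Fin (n + 1) → Fin (n + 1)}
    (halt : Alternating p) (havoid : Avoids p (id : Fin (t + 2) → Fin (t + 2)))
    (hlast : rank p (Fin.last n) ≤ t) {i : Fin (n + 1)} (hi : t < rank p i) : Odd (i : ℕ) := by
  rw [avoids_id_iff] at havoid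
  by_contra hi_odd
  have hlt : i < Fin.last n := by
    refine lt_of_le_of_ne (Fin.le_last i) ?_
    rintro rfl
    exact hi.not_ge hlast
  obtain ⟨b, hib, -⟩ := exists_covBy_le_of_lt hlt
  have hpib : p i < p b :=
    (alternating_iff_covBy.1 halt i b hib).2 (Nat.not_odd_iff_even.1 hi_odd)
  exact (havoid b).not_gt ((Nat.succ_le_of_lt hi).trans_lt (rank_lt_rank hib.lt hpib))

end Alternating

section Counting

variable {m n t : ℕ}

theorem card_alternating_avoids_swapLastTwo (ht : 0 < t) :
    Nat.card {p : Fin (2 * m + 1) → Fin (2 * m + 1) // Bijective p ∧ Alternating p ∧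
      Avoids p (swapLastTwo t)} =
    Nat.card {p : Fin (2 * m + 1) → Fin (2 * m + 1) // Bijective p ∧ Alternating p ∧
      Avoids p (id : Fin (t + 2) → Fin (t + 2)) ∧ rank p (Fin.last (2 * m)) ≤ t} := by
  refine card_eq_of_biTotal_of_biUnique (R := fun p q => SameLowEntries t p.1 q.1)
    ⟨?_, ?_⟩ ⟨?_, ?_⟩
  · rintro ⟨p, hp, halt, havoid⟩
    obtain ⟨q, hq, hpq, hqa⟩ := exists_sameLowEntries_avoids_id ht hp
    have hodd : ∀ i, t < rank p i → Odd (i : ℕ) := fun _ =>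
      halt.odd_of_lt_rank_of_avoids_swapLastTwo ht hp.injective havoid
    have hlast : rank p (Fin.last (2 * m)) ≤ t :=
      le_of_not_gt fun hlt => Nat.not_odd_iff_even.2 (even_two_mul m) (hodd _ hlt)
    exact ⟨⟨q, hq, hpq.alternating halt hodd, hqa, (hpq.rank_le_iff _).1 hlast⟩, hpq⟩
  · rintro ⟨q, hq, halt, havoid, hlast⟩
    obtain ⟨p, hp, hqp, hpa⟩ := exists_sameLowEntries_avoids_swapLastTwo ht hq
    have hodd : ∀ i, t < rank q i → Odd (i : ℕ) := fun _ =>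
      halt.odd_of_lt_rank_of_avoids_id havoid hlast
    exact ⟨⟨p, hp, hqp.alternating halt hodd, hpa⟩, hqp.symm⟩
  · rintro ⟨p, hp, -, hpa⟩ ⟨p', hp', -, hpa'⟩ q (hpq : SameLowEntries t p q)
      (hpq' : SameLowEntries t p' q)
    exact Subtype.ext ((hpq.trans hpq'.symm).eq_of_avoids_swapLastTwo ht hp hp' hpa hpa')
  · rintro p ⟨q, hq, -, hqa, -⟩ ⟨q', hq', -, hqa', -⟩ (hpq : SameLowEntries t p.1 q)
      (hpq' : SameLowEntries t p.1 q')
    exact Subtype.ext ((hpq.symm.trans hpq').eq_of_avoids_id ht hq hq' hqa hqa')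

theorem card_alternating_avoids_id_eq_add (i : Fin n) :
    Nat.card {p : Fin n → Fin n // Bijective p ∧ Alternating p ∧
      Avoids p (id : Fin (t + 2) → Fin (t + 2))} =
    Nat.card {p : Fin n → Fin n // Bijective p ∧ Alternating p ∧
      Avoids p (id : Fin (t + 2) → Fin (t + 2)) ∧ rank p i = t + 1} +
    Nat.card {p : Fin n → Fin n // Bijective p ∧ Alternating p ∧
      Avoids p (id : Fin (t + 2) → Fin (t + 2)) ∧ rank p i ≤ t} := by
  rw [← card_subtype_and_add_card_subtype_and_not _ (fun p => rank p i = t + 1)]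
  simp only [and_assoc]
  congr 1
  refine Nat.card_congr (Equiv.subtypeEquivRight fun p => ?_)
  refine and_congr_right fun _ => and_congr_right fun _ => and_congr_right fun havoid => ?_
  have := avoids_id_iff.1 havoid i
  omega

end Counting

theorem stmt12 (k n : ℕ) (hk : 3 ≤ k) (hn : Odd n) :
    Nat.card {p : Fin n → Fin n // Function.Bijective p ∧ Alternating p ∧
      Avoids p (id : Fin k → Fin k)} -
    Nat.card {p : Fin n → Fin n // Function.Bijective p ∧ Alternating p ∧
      Avoids p ⇑(Equiv.swap (⟨k - 2, by omega⟩ : Fin k) ⟨k - 1, by omega⟩)} =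
    Nat.card {p : Fin n → Fin n // Function.Bijective p ∧ Alternating p ∧
      Avoids p (id : Fin k → Fin k) ∧
      rank p ⟨n - 1, by rcases hn with ⟨m, rfl⟩; omega⟩ = k - 1} := by
  obtain ⟨t, rfl⟩ := Nat.exists_eq_add_of_le' (Nat.le_of_succ_le hk)
  obtain ⟨m, rfl⟩ := hn
  have ht : 0 < t := by omega
  apply Nat.sub_eq_of_eq_add
  refine (card_alternating_avoids_id_eq_add (Fin.last (2 * m))).trans ?_
  rw [← card_alternating_avoids_swapLastTwo ht]
  rfl
end

section
/- For every integer k ≥ 3 and every positive integer n (of either parity), the number of alternating permutations of length n avoiding 12⋯k equals the number of alternating permutations of length n avoiding 213⋯k. -/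
open Function

/-!
The increasing tail `3⋯k` may be replaced by any nonempty pattern `r`: the patterns `12 ⊕ r` and
`21 ⊕ r` are avoided by equally many alternating permutations.

Call a cell of the permutation matrix covered if some occurrence of `r` lies strictly above and to
the right of it, and call two permutations equivalent if they differ only in covered cells. Every
covered cell is covered by an occurrence of `r` made of uncovered entries, so equivalent
permutations have the same covered region. An occurrence of `12 ⊕ r` (of `21 ⊕ r`) is an ascent (a
descent) the upper right corner of whose bounding box is covered; exchanging its two values stays
in the class, and repeating this leads to a member avoiding the pattern. Such a member is unique:
the last position where two of them differ would end a forbidden pair in one of the two.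

In an alternating permutation avoiding either pattern no peak is covered. Changing covered entries
therefore keeps every peak above its neighbours, so the whole class is alternating.
-/

section Occurrence

variable {ι α κ β : Type*} [Preorder ι] [Preorder α] [Preorder κ] [Preorder β]

/-- The positions `f` carry an occurrence of the pattern `q` in the word `p`. -/
def IsOccurrence (p : ι → α) (q : κ → β) (f : κ → ι) : Prop :=
  StrictMono f ∧ ∀ a b, q a < q b ↔ p (f a) < p (f b)

lemma IsOccurrence.congr {p p' : ι → α} {q : κ → β} {f : κ → ι} (h : IsOccurrence p q f)
    (hpp' : ∀ a, p (f a) = p' (f a)) : IsOccurrence p' q f :=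
  ⟨h.1, fun a b => by rw [← hpp', ← hpp', h.2]⟩

end Occurrence

section DirectSum

variable {l m n : ℕ}

/-- The direct sum `s ⊕ r` of two patterns: `s`, followed by a copy of `r` all of whose values
exceed those of `s`. -/
def directSum (s : Fin l → Fin l) (r : Fin m → Fin m) : Fin (l + m) → Fin (l + m) :=
  Fin.append (Fin.castAdd m ∘ s) (Fin.natAdd l ∘ r)

lemma castAdd_lt_natAdd (i : Fin l) (j : Fin m) : Fin.castAdd m i < Fin.natAdd l j :=
  Fin.lt_def.2 (i.2.trans_le (Nat.le_add_right l j))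

lemma directSum_castAdd (s : Fin l → Fin l) (r : Fin m → Fin m) (i : Fin l) :
    directSum s r (Fin.castAdd m i) = Fin.castAdd m (s i) :=
  Fin.append_left _ _ i

lemma directSum_natAdd (s : Fin l → Fin l) (r : Fin m → Fin m) (j : Fin m) :
    directSum s r (Fin.natAdd l j) = Fin.natAdd l (r j) :=
  Fin.append_right _ _ j

lemma directSum_id_id : directSum (id : Fin l → Fin l) (id : Fin m → Fin m) = id :=
  Fin.append_castAdd_natAdd (f := id)

lemma directSum_swap_id (i j : Fin l) :
    directSum ⇑(Equiv.swap i j) (id : Fin m → Fin m) =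
      Equiv.swap (Fin.castAdd m i) (Fin.castAdd m j) := by
  funext x
  refine Fin.addCases (fun y => ?_) (fun y => ?_) x
  · rw [directSum_castAdd, (Fin.castAdd_injective l m).swap_apply]
  · have hne (i : Fin l) : Fin.natAdd l y ≠ Fin.castAdd m i := (castAdd_lt_natAdd i y).ne'
    rw [directSum_natAdd, Equiv.swap_apply_of_ne_of_ne (hne i) (hne j), id]

lemma contains_directSum_iff {p : Fin n → Fin n} {s : Fin l → Fin l} {r : Fin m → Fin m} :
    Contains p (directSum s r) ↔ ∃ f g, IsOccurrence p s f ∧ IsOccurrence p r g ∧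
      ∀ i j, f i < g j ∧ p (f i) < p (g j) := by
  constructor
  · rintro ⟨h, hmono, hlt⟩
    refine ⟨h ∘ Fin.castAdd m, h ∘ Fin.natAdd l,
      ⟨hmono.comp (Fin.strictMono_castAdd m), fun a b => ?_⟩,
      ⟨hmono.comp (Fin.strictMono_natAdd l), fun a b => ?_⟩, fun i j =>
      ⟨hmono (castAdd_lt_natAdd i j), (hlt _ _).1 ?_⟩⟩
    · simpa [directSum_castAdd, (Fin.strictMono_castAdd m).lt_iff_lt] using
        hlt (Fin.castAdd m a) (Fin.castAdd m b)
    · simpa [directSum_natAdd] using hlt (Fin.natAdd l a) (Fin.natAdd l b)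
    · simpa only [directSum_castAdd, directSum_natAdd] using castAdd_lt_natAdd _ _
  · rintro ⟨f, g, hf, hg, hfg⟩
    refine ⟨Fin.append f g, ?_, ?_⟩
    · simp [StrictMono, Fin.forall_fin_add, (Fin.strictMono_castAdd m).lt_iff_lt, hf.1.lt_iff_lt,
        hg.1.lt_iff_lt, hfg, (castAdd_lt_natAdd _ _).not_gt]
    · simp [Fin.forall_fin_add, directSum_castAdd, directSum_natAdd,
        (Fin.strictMono_castAdd m).lt_iff_lt, hf.2, hg.2, hfg, castAdd_lt_natAdd,
        (castAdd_lt_natAdd _ _).not_gt, (hfg _ _).2.not_gt]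

end DirectSum

section Covered

variable {ι α κ β : Type*} [LinearOrder ι] [LinearOrder α] [Preorder κ] [Preorder β]
  {r : κ → β} {p q : ι → α}

/-- The cell in column `c` and row `v` lies strictly below and to the left of an occurrence of
`r` in `p`. The cell need not be an entry of `p`. -/
def IsCovered (r : κ → β) (p : ι → α) (c : ι) (v : α) : Prop :=
  ∃ g, IsOccurrence p r g ∧ ∀ j, c < g j ∧ v < p (g j)

/-- `p` has entries at positions `a < b`, both covered by the same occurrence of `r`, whose values
are related by `R`. For `R` equal to `<` (to `>`) this is an occurrence of `12 ⊕ r` (of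
`21 ⊕ r`). -/
def HasCoveredPair (r : κ → β) (R : α → α → Prop) (p : ι → α) : Prop :=
  ∃ a b, a < b ∧ R (p a) (p b) ∧ IsCovered r p b (p a ⊔ p b)

/-- `p` and `q` differ only in covered cells. The covered region is taken with respect to `p`; by
`CoverEquiv.isCovered_iff` that of `q` is the same. -/
def CoverEquiv (r : κ → β) (p q : ι → α) : Prop :=
  ∀ i, p i = q i ∨ IsCovered r p i (p i ⊔ q i)

lemma IsCovered.mono {c c' : ι} {v v' : α} (h : IsCovered r p c v) (hc : c' ≤ c) (hv : v' ≤ v) :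
    IsCovered r p c' v' :=
  let ⟨g, hg, hlt⟩ := h
  ⟨g, hg, fun j => ⟨hc.trans_lt (hlt j).1, hv.trans_lt (hlt j).2⟩⟩

lemma isCovered_sup_iff {c : ι} {v w : α} :
    IsCovered r p c (v ⊔ w) ↔ IsCovered r p c v ∧ IsCovered r p c w :=
  ⟨fun h => ⟨h.mono le_rfl le_sup_left, h.mono le_rfl le_sup_right⟩,
    fun ⟨hv, hw⟩ => by rcases max_choice v w with hmax | hmax <;> rwa [hmax]⟩

lemma IsCovered.of_covBy {c c' : ι} {v : α} (h : IsCovered r p c v) (hc : c ⋖ c')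
    (hv : p c' ≤ v) : IsCovered r p c' v := by
  obtain ⟨g, hg, hlt⟩ := h
  refine ⟨g, hg, fun j => ⟨(hc.ge_of_gt (hlt j).1).lt_of_ne ?_, (hlt j).2⟩⟩
  rintro rfl
  exact hv.not_gt (hlt j).2

-- If an entry of a covering occurrence is itself covered, pass to an occurrence further right.
lemma IsCovered.exists_isOccurrence_forall_not_isCovered [WellFoundedGT ι] {c : ι} {v : α}
    (h : IsCovered r p c v) :
    ∃ g, IsOccurrence p r g ∧ (∀ j, c < g j ∧ v < p (g j)) ∧
      ∀ j, ¬ IsCovered r p (g j) (p (g j)) := by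
  induction c using WellFoundedGT.induction generalizing v with
  | ind c ih =>
    obtain ⟨g, hg, hlt⟩ := h
    by_cases hcov : ∃ j, IsCovered r p (g j) (p (g j))
    · obtain ⟨j, hj⟩ := hcov
      obtain ⟨g', hg', hlt', hunc⟩ := ih (g j) (hlt j).1 hj
      exact ⟨g', hg', fun i => ⟨(hlt j).1.trans (hlt' i).1, (hlt j).2.trans (hlt' i).2⟩, hunc⟩
    · exact ⟨g, hg, hlt, not_exists.1 hcov⟩

namespace CoverEquiv

lemma eq_of_not_isCovered (h : CoverEquiv r p q) {i : ι} (hi : ¬ IsCovered r p i (p i)) :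
    p i = q i :=
  (h i).resolve_right fun hcov => hi (isCovered_sup_iff.1 hcov).1

lemma isCovered_iff [WellFoundedGT ι] (h : CoverEquiv r p q) {c : ι} {v : α} :
    IsCovered r q c v ↔ IsCovered r p c v := by
  constructor
  · rintro ⟨g, hg, hlt⟩
    by_cases hcov : ∃ j, IsCovered r p (g j) (q (g j))
    · obtain ⟨j, hj⟩ := hcov
      exact hj.mono (hlt j).1.le (hlt j).2.le
    · have heq (j) : q (g j) = p (g j) :=
        ((h (g j)).resolve_right fun hj => hcov ⟨j, (isCovered_sup_iff.1 hj).2⟩).symm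
      exact ⟨g, hg.congr heq, fun j => heq j ▸ hlt j⟩
  · intro hcov
    obtain ⟨g, hg, hlt, hunc⟩ := hcov.exists_isOccurrence_forall_not_isCovered
    have heq (j) : p (g j) = q (g j) := h.eq_of_not_isCovered (hunc j)
    exact ⟨g, hg.congr heq, fun j => heq j ▸ hlt j⟩

lemma equivalence [WellFoundedGT ι] (r : κ → β) :
    Equivalence (CoverEquiv r : (ι → α) → (ι → α) → Prop) where
  refl _ _ := .inl rfl
  symm h i := by
    rw [h.isCovered_iff, sup_comm]
    exact (h i).imp_left Eq.symm
  trans {p q s} hpq hqs i := by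
    have hq := hpq i
    have hs := hqs i
    rw [hpq.isCovered_iff] at hs
    rw [isCovered_sup_iff] at hq hs ⊢
    grind

lemma comp_swap {a b : ι} (hab : a ≤ b) (h : IsCovered r p b (p a ⊔ p b)) :
    CoverEquiv r p (p ∘ Equiv.swap a b) := by
  intro i
  rcases eq_or_ne i a with rfl | ha
  · exact .inr (by simpa using h.mono hab le_rfl)
  rcases eq_or_ne i b with rfl | hb
  · exact .inr (by simpa [sup_comm] using h)
  · exact .inl (by simp [Equiv.swap_apply_of_ne_of_ne ha hb])

lemma apply_lt_of_covBy (h : CoverEquiv r p q) {i j : ι} (hj : ¬ IsCovered r p j (p j))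
    (hij : i ⋖ j) (hlt : p i < p j) : q i < q j := by
  rw [← h.eq_of_not_isCovered hj]
  rcases h i with heq | hcov
  · rwa [← heq]
  · by_contra! hle
    exact hj (((isCovered_sup_iff.1 hcov).2.of_covBy hij hle).mono le_rfl hle)

lemma apply_le_of_le (h : CoverEquiv r p q) {i j : ι} (hi : ¬ IsCovered r p i (p i))
    (hij : i ≤ j) (hle : p j ≤ p i) : q j ≤ q i := by
  rw [← h.eq_of_not_isCovered hi]
  rcases h j with heq | hcov
  · rwa [← heq]
  · by_contra! hlt
    exact hi ((isCovered_sup_iff.1 hcov).2.mono hij hlt.le)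

end CoverEquiv

end Covered

section Representatives

variable {ι α : Type*} [LinearOrder ι]

-- Take `σ` with `p ∘ σ` lexicographically maximal, values being compared by `R`.
lemma exists_perm_mem_forall_mul_swap_notMem [Finite ι] (R : α → α → Prop) [IsStrictOrder α R]
    (p : ι → α) {C : Set (Equiv.Perm ι)} (hC : C.Nonempty) :
    ∃ σ ∈ C, ∀ a b, a < b → R (p (σ a)) (p (σ b)) → σ * Equiv.swap a b ∉ C := by
  let : PartialOrder α := partialOrderOfSO R
  obtain ⟨σ, hσ, hmax⟩ :=
    C.toFinite.exists_maximalFor (fun σ : Equiv.Perm ι => toLex (p ∘ σ)) C hC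
  refine ⟨σ, hσ, fun a b hab hR hmem => ?_⟩
  have hlt : toLex (p ∘ σ) < toLex (p ∘ (σ * Equiv.swap a b)) := by
    refine ⟨a, fun j hj => ?_, by simpa using show p (σ a) < p (σ b) from hR⟩
    simp [Equiv.swap_apply_of_ne_of_ne hj.ne (hj.trans hab).ne]
  exact hlt.not_ge (hmax hmem hlt.le)

lemma exists_lt_apply_eq_of_forall_gt_eq {p q : ι → α} (hp : Surjective p)
    (hq : Injective q) {b : ι} (hb : p b ≠ q b) (h : ∀ i, b < i → p i = q i) :
    ∃ a < b, p a = q b := by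
  obtain ⟨a, ha⟩ := hp (q b)
  refine ⟨a, ?_, ha⟩
  by_contra! hba
  rcases hba.eq_or_lt with rfl | hlt
  · exact hb ha
  · exact hlt.ne (hq ((h a hlt).symm.trans ha)).symm

variable [LinearOrder α] {κ β : Type*} [Preorder κ] [Preorder β]

lemma exists_perm_coverEquiv_not_hasCoveredPair [Finite ι] (r : κ → β) (R : α → α → Prop)
    [IsStrictOrder α R] (p : ι → α) :
    ∃ σ : Equiv.Perm ι, CoverEquiv r p (p ∘ σ) ∧ ¬ HasCoveredPair r R (p ∘ σ) := by
  obtain ⟨σ, hσ, hswap⟩ := exists_perm_mem_forall_mul_swap_notMem R p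
    (C := {σ | CoverEquiv r p (p ∘ σ)}) ⟨1, (CoverEquiv.equivalence r).refl p⟩
  refine ⟨σ, hσ, ?_⟩
  rintro ⟨a, b, hab, hR, hcov⟩
  exact hswap a b hab hR
    ((CoverEquiv.equivalence r).trans hσ (CoverEquiv.comp_swap hab.le hcov))

lemma CoverEquiv.not_rel_of_forall_gt_eq {r : κ → β} {R : α → α → Prop} {p q : ι → α}
    (h : CoverEquiv r p q) (hp : Surjective p) (hq : Injective q) (hpR : ¬ HasCoveredPair r R p)
    {b : ι} (hb : p b ≠ q b) (heq : ∀ i, b < i → p i = q i) : ¬ R (q b) (p b) := by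
  intro hR
  obtain ⟨a, hab, ha⟩ := exists_lt_apply_eq_of_forall_gt_eq hp hq hb heq
  exact hpR ⟨a, b, hab, ha ▸ hR, by rw [ha, sup_comm]; exact (h b).resolve_left hb⟩

lemma CoverEquiv.eq_of_not_hasCoveredPair [WellFoundedGT ι] {r : κ → β} {R : α → α → Prop}
    [Std.Trichotomous R] {p q : ι → α} (h : CoverEquiv r p q) (hp : Bijective p)
    (hq : Bijective q) (hpR : ¬ HasCoveredPair r R p) (hqR : ¬ HasCoveredPair r R q) : p = q := by
  by_contra hne
  obtain ⟨b, hb, hlast⟩ := wellFounded_gt.has_min {i | p i ≠ q i} (ne_iff.1 hne)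
  have heq (i) (hi : b < i) : p i = q i := not_not.1 fun hpq => hlast i hpq hi
  have hqp : ¬ R (q b) (p b) := h.not_rel_of_forall_gt_eq hp.2 hq.1 hpR hb heq
  have hpq : ¬ R (p b) (q b) := ((CoverEquiv.equivalence r).symm h).not_rel_of_forall_gt_eq
    hq.2 hp.1 hqR hb.symm fun i hi => (heq i hi).symm
  exact hb (Std.Trichotomous.trichotomous _ _ hpq hqp)

end Representatives

section Alternating

variable {κ β : Type*} [Preorder κ] [Preorder β] {n : ℕ} {r : κ → β} {p q : Fin n → Fin n}

lemma covBy_mk_succ {i : ℕ} (hi : i + 1 < n) : (⟨i, by omega⟩ : Fin n) ⋖ ⟨i + 1, hi⟩ :=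
  ⟨by simp, fun c h₁ h₂ => by simp only [Fin.lt_def] at h₁ h₂; omega⟩

-- Counting from `0`, the peaks of an alternating permutation are its odd positions.
lemma Alternating.not_isCovered_of_not_hasCoveredPair_lt (hp : Alternating p)
    (h : ¬ HasCoveredPair r (· < ·) p) {i : Fin n} (hi : i.1 % 2 = 1) :
    ¬ IsCovered r p i (p i) := by
  obtain ⟨_ | i, hin⟩ := i
  · simp at hi
  intro hcov
  have hlt := (hp i hin).2 (by simp only at hi; omega)
  exact h ⟨_, _, (covBy_mk_succ hin).lt, hlt, by rwa [sup_eq_right.2 hlt.le]⟩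

lemma Alternating.not_isCovered_of_not_hasCoveredPair_gt [Nonempty κ] (hp : Alternating p)
    (hinj : Injective p) (h : ¬ HasCoveredPair r (· > ·) p) {i : Fin n}
    (hi : i.1 % 2 = 1) : ¬ IsCovered r p i (p i) := by
  intro hcov
  have hin : i.1 + 1 < n := by
    obtain ⟨g, -, hlt⟩ := hcov
    obtain ⟨j⟩ := ‹Nonempty κ›
    have := Fin.lt_def.1 (hlt j).1
    omega
  have hle : p ⟨i + 1, hin⟩ ≤ p i := not_lt.1 fun hlt => by have := (hp i hin).1 hlt; omega
  have hcb : i ⋖ ⟨i + 1, hin⟩ := covBy_mk_succ hin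
  exact h ⟨i, _, hcb.lt, hle.lt_of_ne (hinj.ne hcb.ne'), by
    rw [sup_eq_left.2 hle]; exact hcov.of_covBy hcb hle⟩

lemma Alternating.of_coverEquiv (hp : Alternating p) (h : CoverEquiv r p q)
    (hodd : ∀ i : Fin n, i.1 % 2 = 1 → ¬ IsCovered r p i (p i)) : Alternating q := by
  intro i hi
  rcases Nat.mod_two_eq_zero_or_one i with heven | hiodd
  · refine iff_of_true ?_ heven
    exact h.apply_lt_of_covBy (hodd ⟨i + 1, hi⟩ (by simp only; omega)) (covBy_mk_succ hi)
      ((hp i hi).2 heven)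
  · refine iff_of_false (not_lt.2 ?_) (by omega)
    exact h.apply_le_of_le (hodd ⟨i, by omega⟩ hiodd) (covBy_mk_succ hi).le
      (not_lt.1 fun hlt => by have := (hp i hi).1 hlt; omega)

lemma Alternating.existsUnique_coverEquiv (hp : Alternating p) (R : Fin n → Fin n → Prop)
    [IsStrictTotalOrder (Fin n) R] (hbij : Bijective p)
    (hodd : ∀ i : Fin n, i.1 % 2 = 1 → ¬ IsCovered r p i (p i)) :
    ∃! q, (Bijective q ∧ Alternating q ∧ ¬ HasCoveredPair r R q) ∧ CoverEquiv r p q := by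
  obtain ⟨σ, hσ, hσR⟩ := exists_perm_coverEquiv_not_hasCoveredPair r R p
  have hσbij : Bijective (p ∘ σ) := hbij.comp σ.bijective
  refine ⟨p ∘ σ, ⟨⟨hσbij, hp.of_coverEquiv hσ hodd, hσR⟩, hσ⟩, ?_⟩
  rintro q ⟨⟨hq, -, hqR⟩, hpq⟩
  have hqσ : CoverEquiv r q (p ∘ σ) :=
    (CoverEquiv.equivalence r).trans ((CoverEquiv.equivalence r).symm hpq) hσ
  exact hqσ.eq_of_not_hasCoveredPair hq hσbij hqR hσR

end Alternating

section Patterns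

variable {m n : ℕ} {p : Fin n → Fin n} {r : Fin m → Fin m}

lemma contains_directSum_iff_hasCoveredPair {s : Fin 2 → Fin 2} {R : Fin n → Fin n → Prop}
    (hs : ∀ f : Fin 2 → Fin n, IsOccurrence p s f ↔ f 0 < f 1 ∧ R (p (f 0)) (p (f 1))) :
    Contains p (directSum s r) ↔ HasCoveredPair r R p := by
  rw [contains_directSum_iff]
  constructor
  · rintro ⟨f, g, hf, hg, hfg⟩
    obtain ⟨hlt, hR⟩ := (hs f).1 hf
    exact ⟨f 0, f 1, hlt, hR, g, hg, fun j => ⟨(hfg 1 j).1, max_lt (hfg 0 j).2 (hfg 1 j).2⟩⟩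
  · rintro ⟨a, b, hab, hR, g, hg, hlt⟩
    refine ⟨![a, b], g, (hs _).2 ⟨hab, hR⟩, hg, fun i j => ?_⟩
    obtain ⟨ha, hb⟩ := max_lt_iff.1 (hlt j).2
    fin_cases i
    · exact ⟨hab.trans (hlt j).1, ha⟩
    · exact ⟨(hlt j).1, hb⟩

lemma avoids_directSum_id_iff :
    Avoids p (directSum (id : Fin 2 → Fin 2) r) ↔ ¬ HasCoveredPair r (· < ·) p := by
  refine not_congr (contains_directSum_iff_hasCoveredPair fun f => ?_)
  simpa [IsOccurrence, StrictMono, Fin.forall_fin_two] using fun _ => le_of_lt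

lemma avoids_directSum_swap_iff :
    Avoids p (directSum ⇑(Equiv.swap (0 : Fin 2) 1) r) ↔ ¬ HasCoveredPair r (· > ·) p := by
  refine not_congr (contains_directSum_iff_hasCoveredPair fun f => ?_)
  simpa [IsOccurrence, StrictMono, Fin.forall_fin_two] using fun _ => le_of_lt

end Patterns

lemma card_subtype_eq_of_existsUnique_rel {X : Type*} {rel : X → X → Prop} {P Q : X → Prop}
    (hsymm : ∀ x y, rel x y → rel y x) (hPQ : ∀ x, P x → ∃! y, Q y ∧ rel x y)
    (hQP : ∀ y, Q y → ∃! x, P x ∧ rel y x) :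
    Nat.card {x // P x} = Nat.card {y // Q y} := by
  choose f hf hf_unique using fun x : {x // P x} => hPQ x x.2
  refine Nat.card_congr (.ofBijective (fun x => ⟨f x, (hf x).1⟩) ⟨fun x x' hxx' => ?_, fun y => ?_⟩)
  · have hff : f x = f x' := congrArg Subtype.val hxx'
    exact Subtype.ext ((hQP _ (hf x).1).unique ⟨x.2, hsymm _ _ (hf x).2⟩
      ⟨x'.2, hff ▸ hsymm _ _ (hf x').2⟩)
  · obtain ⟨x, ⟨hx, hyx⟩, -⟩ := hQP y y.2
    exact ⟨⟨x, hx⟩, Subtype.ext (hf_unique ⟨x, hx⟩ y ⟨y.2, hsymm _ _ hyx⟩).symm⟩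

theorem stmt14_general {m : ℕ} (n : ℕ) (hm : 0 < m) (r : Fin m → Fin m) :
    Nat.card {p : Fin n → Fin n // Bijective p ∧ Alternating p ∧
      Avoids p (directSum (id : Fin 2 → Fin 2) r)} =
    Nat.card {p : Fin n → Fin n // Bijective p ∧ Alternating p ∧
      Avoids p (directSum ⇑(Equiv.swap (0 : Fin 2) 1) r)} := by
  have : Nonempty (Fin m) := ⟨⟨0, hm⟩⟩
  simp only [avoids_directSum_id_iff, avoids_directSum_swap_iff]
  refine card_subtype_eq_of_existsUnique_rel (rel := CoverEquiv r)
    (fun _ _ h => (CoverEquiv.equivalence r).symm h) ?_ ?_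
  · rintro p ⟨hbij, halt, havoid⟩
    exact halt.existsUnique_coverEquiv (· > ·) hbij fun _ =>
      halt.not_isCovered_of_not_hasCoveredPair_lt havoid
  · rintro p ⟨hbij, halt, havoid⟩
    exact halt.existsUnique_coverEquiv (· < ·) hbij fun _ =>
      halt.not_isCovered_of_not_hasCoveredPair_gt hbij.injective havoid

theorem stmt14 (k n : ℕ) (hk : 3 ≤ k) (hn : 0 < n) :
    Nat.card {p : Fin n → Fin n // Function.Bijective p ∧ Alternating p ∧
      Avoids p (id : Fin k → Fin k)} =
    Nat.card {p : Fin n → Fin n // Function.Bijective p ∧ Alternating p ∧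
      Avoids p ⇑(Equiv.swap (⟨0, by omega⟩ : Fin k) ⟨1, by omega⟩)} := by
  obtain ⟨m, rfl⟩ := Nat.exists_eq_add_of_le (show 2 ≤ k by omega)
  have h := stmt14_general n (by omega) (id : Fin m → Fin m)
  rwa [directSum_id_id, directSum_swap_id] at h
end
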